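/- arXiv:math/0204179 — 2 statements merged into one kernel-verified Lean document; each statement's English description precedes it below -/
import Mathlib

section
/- Let f ∈ K[X] be a polynomial of degree d ≥ 2 with good reduction, and fix q ∈ 𝒪. Then for every ε > 0 there exists N such that every periodic point ξ ≠ q of f whose least period n satisfies n ≥ N has |ξ − q| > 1 − ε. (That is, |q − ξ| → 1 as the least period of ξ tends to infinity, provided ξ ≠ q.) -/
open Polynomial

/-!
Let `R` be the ring of integers, `r < 1`, and `I` the ideal of elements of absolute value at most
`r`. If `G ∈ R[X]` is congruent to `X` modulo `I`, then `G⁽ⁿ⁾ - X = (G - X) (n + e)` with `e` in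
`I[X]`. Taking for `n` a prime number, this shows that all periodic points of `G` are fixed as soon
as `I` contains no prime number; taking for `n` the prime number `p ∈ I`, if there is one, it shows
that `G` iterated `p ^ k` times is congruent to `X` modulo `I ^ (k + 1)`, which no longer contains
`p` when `k` is large. So the periods of periodic points are bounded uniformly in `G`.

If the disc `q + I` contains two distinct periodic points of `f`, some iterate `h` of `f` fixes
both, and the difference quotient of `h` between them shows that `h' ≡ 1` modulo `I` at one of them,
`z`. For every other periodic point `z + ρ` of the disc, the rescaled polynomial
`ρ⁻¹ (h (z + ρ X) - z)` is congruent to `X` modulo `I` and has `1` as a periodic point, so its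
period is bounded independently of `ρ`.
-/

open Function hiding comp eval

section Semiconj

variable {α β : Type*} {g : α → β} {fa : α → α} {fb : β → β}

theorem isPeriodicPt_apply_iff_of_semiconj (hg : Injective g) (h : Semiconj g fa fb) {n : ℕ}
    {x : α} : IsPeriodicPt fb n (g x) ↔ IsPeriodicPt fa n x := by
  rw [IsPeriodicPt, IsFixedPt, ← (h.iterate_right n).eq, hg.eq_iff, IsPeriodicPt, IsFixedPt]

theorem minimalPeriod_apply_of_semiconj (hg : Injective g) (h : Semiconj g fa fb) (x : α) :
    minimalPeriod fb (g x) = minimalPeriod fa x :=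
  minimalPeriod_eq_minimalPeriod_iff.2 fun _ => isPeriodicPt_apply_iff_of_semiconj hg h

end Semiconj

section Iterate

variable {R : Type*} [CommRing R]

theorem eval_iterate_comp_X (f : R[X]) (n : ℕ) :
    (fun x => (f.comp^[n] X).eval x) = (fun x => f.eval x)^[n] := by
  funext x
  rw [iterate_comp_eval, eval_X]

theorem iterate_comp_X_comp (f g : R[X]) (n : ℕ) : (f.comp^[n] X).comp g = f.comp^[n] g := by
  induction n with
  | zero => exact X_comp
  | succ n ih => rw [iterate_succ_apply', iterate_succ_apply', Polynomial.comp_assoc, ih]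

theorem iterate_comp_X_mul (f : R[X]) (m n : ℕ) :
    f.comp^[m * n] X = (f.comp^[m] X).comp^[n] X := by
  have h : (f.comp^[m] X).comp = f.comp^[m] := funext fun g => iterate_comp_X_comp f g m
  rw [h, iterate_mul]

end Iterate

section CongruentToX

variable {R : Type*} [CommRing R] {I : Ideal R} {G : R[X]}

theorem eval_mem_of_mem_map_C {H : R[X]} (hH : H ∈ I.map C) (x : R) : H.eval x ∈ I := by
  rw [eval_eq_sum_range]
  exact Ideal.sum_mem _ fun i _ => I.mul_mem_right _ (Ideal.mem_map_C_iff.1 hH i)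

theorem comp_sub_comp_mem_map_C_mul_span {H : R[X]} (hH : H ∈ I.map C) (P Q : R[X]) :
    H.comp P - H.comp Q ∈ I.map C * Ideal.span {P - Q} := by
  rw [comp, comp, eval₂_eq_sum_range, eval₂_eq_sum_range, ← Finset.sum_sub_distrib]
  refine Ideal.sum_mem _ fun i _ => ?_
  rw [← mul_sub]
  exact Ideal.mul_mem_mul (Ideal.mem_map_of_mem C (Ideal.mem_map_C_iff.1 hH i))
    (Ideal.mem_span_singleton.2 (sub_dvd_pow_sub_pow P Q i))

theorem exists_iterate_comp_X_sub_X_eq (hG : G - X ∈ I.map C) (n : ℕ) :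
    ∃ e ∈ I.map C, G.comp^[n] X - X = (G - X) * ((n : R[X]) + e) := by
  induction n with
  | zero => exact ⟨0, zero_mem _, by simp⟩
  | succ n ih =>
    obtain ⟨e, he, hn⟩ := ih
    rw [iterate_succ_apply']
    set P := G.comp^[n] X
    obtain ⟨w, hw, hP⟩ :=
      Ideal.mem_mul_span_singleton.1 (comp_sub_comp_mem_map_C_mul_span hG P X)
    simp only [sub_comp, X_comp, comp_X] at hP
    refine ⟨e + w * (n + e), add_mem he (Ideal.mul_mem_right _ _ hw), ?_⟩
    push_cast
    linear_combination -hP + (1 + w) * hn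

theorem iterate_comp_X_sub_X_mem_map_C (hG : G - X ∈ I.map C) (n : ℕ) :
    G.comp^[n] X - X ∈ I.map C := by
  obtain ⟨e, -, he⟩ := exists_iterate_comp_X_sub_X_eq hG n
  rw [he]
  exact Ideal.mul_mem_right _ _ hG

theorem iterate_pow_comp_X_sub_X_mem_map_C {p : ℕ} (hp : (p : R) ∈ I) (hG : G - X ∈ I.map C)
    (k : ℕ) : G.comp^[p ^ k] X - X ∈ (I ^ (k + 1)).map C := by
  induction k with
  | zero => simpa using hG
  | succ k ih =>
    obtain ⟨e, he, hk⟩ := exists_iterate_comp_X_sub_X_eq ih p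
    have hpe : (p : R[X]) + e ∈ I.map C := by
      refine add_mem ?_ (Ideal.map_mono (Ideal.pow_le_self k.succ_ne_zero) he)
      simpa using Ideal.mem_map_of_mem C hp
    rw [pow_succ p, iterate_comp_X_mul, hk, pow_succ I (k + 1), Ideal.map_mul]
    exact Ideal.mul_mem_mul ih hpe

theorem prime_natCast_notMem_pow {p k : ℕ} (hp : p.Prime) (hpI : (p : R) ∈ I)
    (hpk : (p : R) ∉ I ^ (k + 1)) {l : ℕ} (hl : l.Prime) : (l : R) ∉ I ^ (k + 1) := by
  intro hlk
  have hlp : IsCoprime (l : R) p :=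
    ((Nat.coprime_primes hl hp).2 fun h => hpk (h ▸ hlk)).cast
  have htop : I = ⊤ := Ideal.eq_top_of_isUnit_mem _ (x := 1) ?_ isUnit_one
  · exact hpk (by simp [htop, Ideal.top_pow])
  · obtain ⟨a, b, hab⟩ := hlp
    rw [← hab]
    exact add_mem (I.mul_mem_left a (Ideal.pow_le_self k.succ_ne_zero hlk)) (I.mul_mem_left b hpI)

variable [IsDomain R]

theorem isFixedPt_of_isPeriodicPt_of_natCast_notMem (hG : G - X ∈ I.map C) {l : ℕ}
    (hl : (l : R) ∉ I) {x : R} (hx : IsPeriodicPt (fun y => G.eval y) l x) :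
    IsFixedPt (fun y => G.eval y) x := by
  obtain ⟨e, he, hGl⟩ := exists_iterate_comp_X_sub_X_eq hG l
  have hprod : (G.eval x - x) * (l + e.eval x) = 0 := by
    have hfix : (G.comp^[l] X).eval x = x := by rw [iterate_comp_eval, eval_X]; exact hx
    simpa [hfix] using (congrArg (eval x) hGl).symm
  refine sub_eq_zero.1 ((mul_eq_zero.1 hprod).resolve_right fun h => hl ?_)
  rw [eq_neg_of_add_eq_zero_left h]
  exact neg_mem (eval_mem_of_mem_map_C he x)

theorem isFixedPt_of_mem_periodicPts (hI : ∀ l : ℕ, l.Prime → (l : R) ∉ I)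
    (hG : G - X ∈ I.map C) {x : R} (hx : x ∈ periodicPts fun y => G.eval y) :
    IsFixedPt (fun y => G.eval y) x := by
  rw [← minimalPeriod_eq_one_iff_isFixedPt]
  set n := minimalPeriod (fun y => G.eval y) x
  by_contra hn
  obtain ⟨l, hl, m, hm⟩ := Nat.exists_prime_and_dvd hn
  have hn0 : 0 < n := minimalPeriod_pos_of_mem_periodicPts hx
  have hm0 : 0 < m := Nat.pos_of_mul_pos_left (hm ▸ hn0)
  have hxm : IsPeriodicPt (fun y => G.eval y) m x := by
    have hxn : IsPeriodicPt (fun y => (G.comp^[m] X).eval y) l x := by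
      rw [eval_iterate_comp_X, IsPeriodicPt, ← iterate_mul, mul_comm, ← hm]
      exact isPeriodicPt_minimalPeriod _ x
    have := isFixedPt_of_isPeriodicPt_of_natCast_notMem
      (iterate_comp_X_sub_X_mem_map_C hG m) (hI l hl) hxn
    rwa [eval_iterate_comp_X] at this
  have hnm : n ≤ m := hxm.minimalPeriod_le hm0
  have : m < n := hm ▸ lt_mul_of_one_lt_left hm0 hl.one_lt
  omega

theorem exists_isPeriodicPt_of_sub_X_mem (hI : ∀ p : ℕ, p.Prime → ∃ k, (p : R) ∉ I ^ k) :
    ∃ M > 0, ∀ G : R[X], G - X ∈ I.map C → ∀ x ∈ periodicPts fun y => G.eval y,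
      IsPeriodicPt (fun y => G.eval y) M x := by
  by_cases hprime : ∃ p : ℕ, p.Prime ∧ (p : R) ∈ I
  · obtain ⟨p, hp, hpI⟩ := hprime
    obtain ⟨k, hk⟩ := hI p hp
    have hpk : (p : R) ∉ I ^ (k + 1) := fun h => hk (Ideal.pow_le_pow_right k.le_succ h)
    refine ⟨p ^ k, pow_pos hp.pos k, fun G hG x ⟨n, hn, hx⟩ => ?_⟩
    have hx' : x ∈ periodicPts fun y => (G.comp^[p ^ k] X).eval y := by
      rw [eval_iterate_comp_X]
      exact ⟨n, hn, hx.iterate _⟩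
    have hfix := isFixedPt_of_mem_periodicPts
      (fun l hl => prime_natCast_notMem_pow hp hpI hpk hl)
      (iterate_pow_comp_X_sub_X_mem_map_C hpI hG k) hx'
    rwa [eval_iterate_comp_X] at hfix
  · push Not at hprime
    exact ⟨1, one_pos, fun G hG x hx => isFixedPt_of_mem_periodicPts hprime hG hx⟩

end CongruentToX

section Rescale

variable {R : Type*} [CommRing R] {I : Ideal R}

/-- The polynomial `ρ⁻¹ (f (z + ρ X) - f z)`, which describes `f` in the coordinate `ρ⁻¹ (x - z)`
on a disc centred at a fixed point `z`. It is written without dividing by `ρ`, through the Taylor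
expansion of `f` at `z`. -/
noncomputable def rescale (f : R[X]) (z ρ : R) : R[X] :=
  X * (taylor z f).divX.comp (C ρ * X)

theorem add_mul_eval_rescale (f : R[X]) (z ρ y : R) :
    f.eval z + ρ * (rescale f z ρ).eval y = f.eval (z + ρ * y) := by
  have h := congrArg (eval (ρ * y)) (divX_mul_X_add (taylor z f))
  simp only [eval_add, eval_mul, eval_X, eval_C, taylor_coeff_zero, taylor_eval] at h
  simp only [rescale, eval_mul, eval_X, eval_comp, eval_C]
  rw [add_comm z, ← h]
  ring

theorem semiconj_rescale {f : R[X]} {z : R} (hz : IsFixedPt (fun x => f.eval x) z) (ρ : R) :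
    Semiconj (fun y => z + ρ * y) (fun y => (rescale f z ρ).eval y) (fun x => f.eval x) :=
  fun y => by simpa only [hz.eq] using add_mul_eval_rescale f z ρ y

theorem rescale_sub_mem_map_C (f : R[X]) (z : R) {ρ : R} (hρ : ρ ∈ I) :
    rescale f z ρ - C (f.derivative.eval z) * X ∈ I.map C := by
  set g := (taylor z f).divX
  have hg : g.comp (C ρ * X) - C (f.derivative.eval z) = C ρ * (X * g.divX.comp (C ρ * X)) := by
    have hg0 : g.coeff 0 = f.derivative.eval z := by rw [coeff_divX, taylor_coeff_one]
    conv_lhs => rw [← divX_mul_X_add g, hg0]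
    simp only [add_comp, mul_comp, X_comp, C_comp]
    ring
  rw [rescale, mul_comm (C (f.derivative.eval z)) X, ← mul_sub, hg]
  exact Ideal.mul_mem_left _ _ (Ideal.mul_mem_right _ _ (Ideal.mem_map_of_mem C hρ))

theorem rescale_sub_X_mem_map_C {f : R[X]} {z : R} (hf : f.derivative.eval z - 1 ∈ I) {ρ : R}
    (hρ : ρ ∈ I) : rescale f z ρ - X ∈ I.map C := by
  have h : rescale f z ρ - X =
      rescale f z ρ - C (f.derivative.eval z) * X + C (f.derivative.eval z - 1) * X := by
    rw [C_sub, C_1]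
    ring
  rw [h]
  exact add_mem (rescale_sub_mem_map_C f z hρ)
    (Ideal.mul_mem_right _ _ (Ideal.mem_map_of_mem C hf))

end Rescale

section PeriodBound

variable {R : Type*} [CommRing R] [IsDomain R] {I : Ideal R}

theorem eval_derivative_sub_one_mem {f : R[X]} {z z' : R} (hz : IsFixedPt (fun x => f.eval x) z)
    (hz' : IsFixedPt (fun x => f.eval x) z') (hne : z' ≠ z) (hI : z' - z ∈ I) :
    f.derivative.eval z - 1 ∈ I := by
  obtain ⟨k, hk⟩ := f.binomExpansion z (z' - z)
  rw [add_sub_cancel, hz'.eq, hz.eq] at hk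
  have h : f.derivative.eval z - 1 = -k * (z' - z) :=
    mul_right_cancel₀ (sub_ne_zero.2 hne) (by linear_combination -hk)
  rw [h]
  exact I.mul_mem_left _ hI

theorem exists_isPeriodicPt_of_eval_derivative_sub_one_mem
    (hI : ∀ p : ℕ, p.Prime → ∃ k, (p : R) ∉ I ^ k) :
    ∃ M > 0, ∀ (f : R[X]) (z : R), IsFixedPt (fun x => f.eval x) z →
      f.derivative.eval z - 1 ∈ I → ∀ x ∈ periodicPts fun x => f.eval x, x - z ∈ I →
      IsPeriodicPt (fun x => f.eval x) M x := by
  obtain ⟨M, hM, hper⟩ := exists_isPeriodicPt_of_sub_X_mem hI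
  refine ⟨M, hM, fun f z hz hfz x ⟨n, hn, hx⟩ hxz => ?_⟩
  obtain rfl | hne := eq_or_ne x z
  · exact hz.isPeriodicPt M
  have hinj : Injective fun y => z + (x - z) * y :=
    (add_right_injective z).comp (mul_right_injective₀ (sub_ne_zero.2 hne))
  have hx1 : z + (x - z) * 1 = x := by ring
  have hiff (m : ℕ) : IsPeriodicPt (fun x => f.eval x) m x ↔
      IsPeriodicPt (fun y => (rescale f z (x - z)).eval y) m 1 := by
    simpa only [hx1] using
      isPeriodicPt_apply_iff_of_semiconj hinj (semiconj_rescale hz (x - z)) (n := m) (x := 1)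
  exact (hiff M).2 (hper _ (rescale_sub_X_mem_map_C hfz hxz) 1 ⟨n, hn, (hiff n).1 hx⟩)

theorem bddAbove_minimalPeriod_of_natCast_notMem_pow
    (hI : ∀ p : ℕ, p.Prime → ∃ k, (p : R) ∉ I ^ k) (f : R[X]) (q : R) :
    BddAbove (minimalPeriod (fun x => f.eval x) ''
      {x ∈ periodicPts fun x => f.eval x | x - q ∈ I}) := by
  set S := {x ∈ periodicPts fun x => f.eval x | x - q ∈ I}
  obtain hS | ⟨z, ⟨⟨m, hm, hz⟩, hzq⟩, z', ⟨⟨m', hm', hz'⟩, hzq'⟩, hne⟩ :=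
    S.subsingleton_or_nontrivial
  · exact (hS.finite.image _).bddAbove
  have sub_mem_of_mem_disc {x y : R} (hx : x - q ∈ I) (hy : y - q ∈ I) : x - y ∈ I := by
    simpa using sub_mem hx hy
  set h := f.comp^[m * m'] X
  have h_eval : (fun x => h.eval x) = (fun x => f.eval x)^[m * m'] := eval_iterate_comp_X f _
  have hfix : IsFixedPt (fun x => h.eval x) z := h_eval ▸ hz.mul_const m'
  have hfix' : IsFixedPt (fun x => h.eval x) z' := h_eval ▸ hz'.const_mul m
  have hderiv := eval_derivative_sub_one_mem hfix hfix' hne.symm (sub_mem_of_mem_disc hzq' hzq)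
  obtain ⟨M, hM, hper⟩ := exists_isPeriodicPt_of_eval_derivative_sub_one_mem hI
  refine ⟨m * m' * M, ?_⟩
  rintro _ ⟨x, ⟨⟨n, hn, hx⟩, hxq⟩, rfl⟩
  have hxM := hper h z hfix hderiv x ⟨n, hn, h_eval ▸ hx.iterate _⟩ (sub_mem_of_mem_disc hxq hzq)
  rw [h_eval, IsPeriodicPt, ← iterate_mul] at hxM
  exact IsPeriodicPt.minimalPeriod_le (Nat.mul_pos (Nat.mul_pos hm hm') hM) hxM

end PeriodBound

section Valuation

variable {K Γ₀ : Type*} [Field K] [LinearOrderedCommGroupWithZero Γ₀] (v : Valuation K Γ₀)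

theorem leIdeal_pow_le (r : Γ₀) (k : ℕ) : v.leIdeal r ^ k ≤ v.leIdeal (r ^ k) := by
  induction k with
  | zero => exact fun x _ => (pow_zero r).symm ▸ x.2
  | succ k ih =>
    rw [pow_succ, Ideal.mul_le]
    intro a ha b hb
    rw [Valuation.mem_leIdeal_iff, pow_succ]
    simpa using mul_le_mul' (ih ha) hb

theorem exists_natCast_notMem_leIdeal_pow [CharZero K] [MulArchimedean Γ₀] {r : Γ₀} (hr : r < 1)
    {n : ℕ} (hn : n ≠ 0) : ∃ k, (n : v.integer) ∉ v.leIdeal r ^ k := by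
  have hvn : v n ≠ 0 := v.ne_zero_iff.2 (Nat.cast_ne_zero.2 hn)
  obtain ⟨k, hk⟩ := exists_pow_lt₀ hr (Units.mk0 _ hvn)
  exact ⟨k, fun h => hk.not_ge (by simpa using leIdeal_pow_le v r k h)⟩

theorem bddAbove_minimalPeriod_of_valuation_sub_le [CharZero K] [MulArchimedean Γ₀]
    (f : v.integer[X]) (q : v.integer) {r : Γ₀} (hr : r < 1) :
    BddAbove (minimalPeriod (fun x => f.eval x) ''
      {x ∈ periodicPts fun x => f.eval x | v (x - q : K) ≤ r}) :=
  bddAbove_minimalPeriod_of_natCast_notMem_pow (I := v.leIdeal r)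
    (fun _ hp => exists_natCast_notMem_leIdeal_pow v hr hp.ne_zero) f q

end Valuation

theorem stmt1_general {K : Type*} [NormedField K] [IsUltrametricDist K] [CharZero K] (f : K[X])
    (hcoeff : ∀ i, ‖f.coeff i‖ ≤ 1) (q : K) (hq : ‖q‖ ≤ 1) :
    ∀ ε > (0 : ℝ), ∃ N : ℕ, ∀ ξ ∈ periodicPts (fun x => f.eval x),
      N ≤ minimalPeriod (fun x => f.eval x) ξ → 1 - ε < ‖ξ - q‖ := by
  intro ε hε
  let v : Valuation K NNReal := NormedField.valuation
  obtain ⟨F, rfl⟩ : ∃ F : v.integer[X], F.map v.integer.subtype = f :=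
    (mem_lifts f).1 ((lifts_iff_coeff_lifts f).2 fun i => ⟨⟨f.coeff i, hcoeff i⟩, rfl⟩)
  have hsemi : Semiconj v.integer.subtype (fun x => F.eval x)
      (fun x => (F.map v.integer.subtype).eval x) :=
    fun x => (eval_map_apply v.integer.subtype x).symm
  have hr : (1 - ε).toNNReal < 1 := by simpa using hε
  obtain ⟨N, hN⟩ := bddAbove_minimalPeriod_of_valuation_sub_le v F ⟨q, hq⟩ hr
  refine ⟨N + 1, fun ξ ⟨n, hn, hξ⟩ hNξ => ?_⟩
  by_contra! hle
  have hξ1 : ‖ξ‖ ≤ 1 := by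
    simpa using (IsUltrametricDist.norm_add_le_max (ξ - q) q).trans (max_le (by linarith) hq)
  let x : v.integer := ⟨ξ, hξ1⟩
  have hx : x ∈ periodicPts fun x => F.eval x :=
    ⟨n, hn, (isPeriodicPt_apply_iff_of_semiconj Subtype.val_injective hsemi).1 hξ⟩
  have hxN : minimalPeriod (fun x => F.eval x) x ≤ N :=
    hN ⟨x, ⟨hx, NNReal.le_toNNReal_of_coe_le hle⟩, rfl⟩
  rw [← minimalPeriod_apply_of_semiconj Subtype.val_injective hsemi x] at hxN
  exact absurd (hNξ.trans hxN) N.lt_irrefl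

/-- for a polynomial of degree `d ≥ 2` with good reduction and `q` integral,
`‖ξ - q‖ → 1` as the least period of the periodic point `ξ ≠ q` tends to infinity. -/
theorem stmt1 {K : Type*} [NormedField K] [IsUltrametricDist K] [CompleteSpace K]
    [IsAlgClosed K] [CharZero K]
    (p : ℕ) (hp : p.Prime) (hpK : ‖(p : K)‖ = (p : ℝ)⁻¹)
    (f : K[X]) (d : ℕ) (hd : 2 ≤ d) (hdeg : f.natDegree = d)
    (hcoeff : ∀ i, ‖f.coeff i‖ ≤ 1) (hlead : ‖f.leadingCoeff‖ = 1)
    (q : K) (hq : ‖q‖ ≤ 1) :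
    ∀ ε > (0 : ℝ), ∃ N : ℕ, ∀ ξ : K, ξ ≠ q →
      ξ ∈ Function.periodicPts (fun x => f.eval x) →
      N ≤ Function.minimalPeriod (fun x => f.eval x) ξ →
      1 - ε < ‖ξ - q‖ := by
  intro ε hε
  obtain ⟨N, hN⟩ := stmt1_general f hcoeff q hq ε hε
  exact ⟨N, fun ξ _ => hN ξ⟩
end

section
/- Let f ∈ K[X] be a polynomial of degree d ≥ 2 with good reduction such that f(0) = 0 and |f′(0) − 1| < 1/p, and let n > 1. Then the product over all nonzero periodic points ξ of f of |ξ| raised to the power aₙ*(ξ) equals 1/p if n is a power of p, and equals 1 otherwise. -/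
open Polynomial

/-- The `n`-th compositional iterate of a polynomial, with `f⁽⁰⁾ = X`. -/
noncomputable def polyIter {K : Type*} [CommSemiring K] (f : K[X]) : ℕ → K[X]
  | 0 => X
  | n + 1 => f.comp (polyIter f n)

/-- `aₙ(ξ)`: the multiplicity of `ξ` as a root of `f⁽ⁿ⁾(X) - X`. -/
noncomputable def aMult {K : Type*} [Field K] (f : K[X]) (n : ℕ) (ξ : K) : ℕ :=
  rootMultiplicity ξ (polyIter f n - X)

/-- `aₙ*(ξ) = Σ_{k ∣ n} μ(n/k)·a_k(ξ)`. -/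
noncomputable def aStar {K : Type*} [Field K] (f : K[X]) (n : ℕ) (ξ : K) : ℤ :=
  ∑ k ∈ n.divisors, (ArithmeticFunction.moebius (n / k)) * (aMult f k ξ : ℤ)

/-!
Since `f(0) = 0`, the lowest nonzero coefficients of `f⁽ᵏ⁾(X) - X` and of `f(X) - X` sit in the same
degree `m`, and their ratio is the geometric sum `1 + L + ⋯ + L^(k-1)` with `L = f'(0)^m`. As `L` is
close to `1`, this sum has the norm of `k`. The leading coefficient of `f⁽ᵏ⁾(X) - X` has norm `1`,
so the product of `‖ξ‖ ^ a_k(ξ)` over `ξ ≠ 0` is the norm of its lowest coefficient, namely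
`‖k‖ * c` with `c` independent of `k`. The product of the `‖ξ‖ ^ aₙ*(ξ)` is therefore the Möbius
inverse of `k ↦ ‖k‖ * c = ‖p‖ ^ v_p(k) * c` at `n`; this inverse takes the value `c` at `1`, `‖p‖`
at the nontrivial powers of `p`, and `1` elsewhere.
-/

open Finset

section GeomSum

theorem geom_sum_range_mul {R : Type*} [Semiring R] (x : R) (a b : ℕ) :
    ∑ i ∈ range (a * b), x ^ i = (∑ i ∈ range b, (x ^ a) ^ i) * ∑ i ∈ range a, x ^ i := by
  induction b with
  | zero => simp
  | succ b ih =>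
    rw [Nat.mul_succ, sum_range_add, ih, sum_range_succ _ b, add_mul, ← pow_mul,
      mul_sum _ _ (x ^ _)]
    simp only [pow_add]

variable {K : Type*} [NormedField K] [IsUltrametricDist K]

theorem norm_pow_sub_one_le {x : K} (hx : ‖x‖ ≤ 1) (n : ℕ) : ‖x ^ n - 1‖ ≤ ‖x - 1‖ := by
  have hsum : ‖∑ i ∈ range n, x ^ i‖ ≤ 1 :=
    IsUltrametricDist.norm_sum_le_of_forall_le_of_nonneg zero_le_one fun i _ ↦ by
      simpa only [norm_pow] using pow_le_one₀ (norm_nonneg x) hx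
  simpa only [← geom_sum_mul, norm_mul] using mul_le_of_le_one_left (norm_nonneg (x - 1)) hsum

theorem norm_geom_sum_sub_natCast_le {x : K} (hx : ‖x‖ ≤ 1) (n : ℕ) :
    ‖∑ i ∈ range n, x ^ i - n‖ ≤ ‖x - 1‖ := by
  have hsum : ∑ i ∈ range n, x ^ i - n = ∑ i ∈ range n, (x ^ i - 1) := by simp
  rw [hsum]
  exact IsUltrametricDist.norm_sum_le_of_forall_le_of_nonneg (norm_nonneg _)
    fun i _ ↦ norm_pow_sub_one_le hx i

theorem norm_le_one_of_norm_sub_one_le {x : K} (hx : ‖x - 1‖ ≤ 1) : ‖x‖ ≤ 1 := by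
  simpa [hx] using IsUltrametricDist.norm_add_le_max (x - 1) 1

theorem norm_geom_sum_eq_norm_natCast {n : ℕ} {x : K}
    (hx : ∀ q : ℕ, q.Prime → q ∣ n → ‖x - 1‖ < ‖(q : K)‖) :
    ‖∑ i ∈ range n, x ^ i‖ = ‖(n : K)‖ := by
  induction n using induction_on_primes generalizing x with
  | zero => simp
  | one => simp
  | prime_mul q a hq ih =>
    have hxq : ‖x - 1‖ < ‖(q : K)‖ := hx q hq (dvd_mul_right q a)
    have hx1 : ‖x‖ ≤ 1 := norm_le_one_of_norm_sub_one_le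
      (hxq.le.trans (IsUltrametricDist.norm_natCast_le_one K q))
    have hsum_q : ‖∑ i ∈ range q, x ^ i‖ = ‖(q : K)‖ := by
      have hlt := (norm_geom_sum_sub_natCast_le hx1 q).trans_lt hxq
      rw [sub_eq_add_neg] at hlt
      simpa only [norm_neg] using
        IsUltrametricDist.norm_eq_of_add_norm_lt_max (hlt.trans_le (by simp))
    have hsum_a : ‖∑ i ∈ range a, (x ^ q) ^ i‖ = ‖(a : K)‖ := ih fun r hr hra ↦
      (norm_pow_sub_one_le hx1 q).trans_lt (hx r hr (hra.mul_left q))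
    rw [geom_sum_range_mul, norm_mul, hsum_q, hsum_a, Nat.cast_mul, norm_mul, mul_comm]

end GeomSum

section NatCast

variable {K : Type*} [NormedField K] [IsUltrametricDist K] {p : ℕ}

theorem norm_natCast_eq_one_of_coprime (hp1 : ‖(p : K)‖ < 1) {m : ℕ} (hm : p.Coprime m) :
    ‖(m : K)‖ = 1 := by
  refine (IsUltrametricDist.norm_natCast_le_one K m).antisymm (not_lt.1 fun hm1 ↦ ?_)
  obtain ⟨u, v, huv⟩ := Nat.isCoprime_iff_coprime.2 hm
  have hbezout : (u : K) * p + v * m = 1 := by exact_mod_cast congrArg (Int.cast : ℤ → K) huv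
  have hlt (z : ℤ) {y : K} (hy : ‖y‖ < 1) : ‖(z : K) * y‖ < 1 := by
    rw [norm_mul]
    exact mul_lt_one_of_nonneg_of_lt_one_right (IsUltrametricDist.norm_intCast_le_one K z)
      (norm_nonneg y) hy
  have hone := (IsUltrametricDist.norm_add_le_max ((u : K) * p) (v * m)).trans_lt
    (max_lt (hlt u hp1) (hlt v hm1))
  rw [hbezout, norm_one] at hone
  exact hone.false

theorem norm_natCast_eq_norm_pow_factorization (hp : p.Prime) (hp1 : ‖(p : K)‖ < 1) {n : ℕ}
    (hn : n ≠ 0) : ‖(n : K)‖ = ‖(p : K)‖ ^ n.factorization p := by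
  conv_lhs => rw [← Nat.ordProj_mul_ordCompl_eq_self n p]
  rw [Nat.cast_mul, norm_mul, norm_natCast_eq_one_of_coprime hp1 (Nat.coprime_ordCompl hp hn),
    mul_one, Nat.cast_pow, norm_pow]

theorem norm_natCast_le_norm_natCast_prime (hp : p.Prime) (hp1 : ‖(p : K)‖ < 1) {q : ℕ}
    (hq : q.Prime) : ‖(p : K)‖ ≤ ‖(q : K)‖ := by
  by_cases hpq : p = q
  · rw [hpq]
  · rw [norm_natCast_eq_one_of_coprime hp1 ((Nat.coprime_primes hp hq).2 hpq)]
    exact hp1.le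

end NatCast

section Moebius

open ArithmeticFunction

theorem prod_divisors_eq_prod_range_factorization {M : Type*} [CommMonoid M] {p n : ℕ}
    (hp : p.Prime) (hn : n ≠ 0) {F : ℕ → M} (hF : ∀ d, (¬ ∃ k, d = p ^ k) → F d = 1) :
    ∏ d ∈ n.divisors, F d = ∏ k ∈ range (n.factorization p + 1), F (p ^ k) := by
  rw [← Nat.prod_divisors_prime_pow hp]
  refine (prod_subset (Nat.divisors_subset_of_dvd hn (Nat.ordProj_dvd n p))
    fun d hd hd' ↦ hF d ?_).symm
  rintro ⟨k, rfl⟩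
  rw [Nat.mem_divisors, hp.pow_dvd_iff_le_factorization hn] at hd
  exact hd' (Nat.mem_divisors.2 ⟨pow_dvd_pow p hd.1, pow_ne_zero _ hp.ne_zero⟩)

variable {G : Type*} [CommGroupWithZero G]

open Classical in
theorem prod_divisors_pow_factorization_mul_zpow_moebius {p n : ℕ} (hp : p.Prime) (hn : 1 < n)
    {a c : G} (ha : a ≠ 0) (hc : c ≠ 0) :
    ∏ d ∈ n.divisors, (a ^ d.factorization p * c) ^ moebius (n / d) =
      if ∃ k, n = p ^ k then a else 1 := by
  let F (d : ℕ) : G := if d = 1 then c else if ∃ k, d = p ^ k then a else 1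
  have hF_ne_zero (d : ℕ) : F d ≠ 0 := by
    simp only [F]
    split_ifs <;> simp [ha, hc]
  have hF_prod (d : ℕ) (hd : 0 < d) : ∏ i ∈ d.divisors, F i = a ^ d.factorization p * c := by
    have hF_not_pow (i : ℕ) (hi : ¬ ∃ k, i = p ^ k) : F i = 1 := by
      have hi1 : i ≠ 1 := fun h ↦ hi ⟨0, by simp [h]⟩
      simp only [F, if_neg hi1, if_neg hi]
    have hF_pow (k : ℕ) : F (p ^ (k + 1)) = a := by
      simp only [F, if_neg (Nat.one_lt_pow k.succ_ne_zero hp.one_lt).ne', exists_apply_eq_apply',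
        if_true]
    rw [prod_divisors_eq_prod_range_factorization hp hd.ne' hF_not_pow, prod_range_succ']
    simp only [hF_pow, prod_const, card_range, pow_zero, F, if_true]
  have hinv := (prod_eq_iff_prod_pow_moebius_eq_of_nonzero (fun d _ ↦ hF_ne_zero d)
    fun d _ ↦ mul_ne_zero (pow_ne_zero _ ha) hc).1 hF_prod n (zero_lt_one.trans hn)
  rw [Nat.prod_divisorsAntidiagonal'
    (f := fun i d ↦ (a ^ d.factorization p * c) ^ moebius i)] at hinv
  simpa only [F, if_neg hn.ne'] using hinv

theorem zpow_sum_eq_prod_zpow {ι : Type*} {a : G} (ha : a ≠ 0) (s : Finset ι) (e : ι → ℤ) :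
    a ^ ∑ i ∈ s, e i = ∏ i ∈ s, a ^ e i := by
  classical
  induction s using Finset.induction_on with
  | empty => simp
  | insert i s hi ih => rw [sum_insert hi, prod_insert hi, zpow_add₀ ha, ih]

end Moebius

section LowestCoeff

section CommSemiring

variable {R : Type*} [CommSemiring R]

theorem X_pow_dvd_comp {f g : R[X]} {m : ℕ} (hf : X ∣ f) (hg : X ^ m ∣ g) :
    X ^ m ∣ g.comp f := by
  obtain ⟨h, rfl⟩ := hg
  rw [mul_comp, X_pow_comp]
  exact (pow_dvd_pow_of_dvd hf m).mul_right _

theorem coeff_comp_of_X_pow_dvd {f g : R[X]} {m : ℕ} (hf : X ∣ f) (hg : X ^ m ∣ g) :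
    (g.comp f).coeff m = g.coeff m * f.coeff 1 ^ m := by
  obtain ⟨u, rfl⟩ := hf
  obtain ⟨h, rfl⟩ := hg
  have hcomp : (X ^ m * h).comp (X * u) = X ^ m * (u ^ m * h.comp (X * u)) := by
    rw [mul_comp, X_pow_comp]
    ring
  have hlow : (u ^ m * h.comp (X * u)).coeff 0 = u.coeff 0 ^ m * h.coeff 0 := by
    simp [coeff_zero_eq_eval_zero]
  rw [hcomp, coeff_X_pow_mul', coeff_X_pow_mul', coeff_X_mul, if_pos le_rfl, if_pos le_rfl,
    Nat.sub_self, hlow, mul_comm]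

theorem polyIter_succ' (f : R[X]) (n : ℕ) : polyIter f (n + 1) = (polyIter f n).comp f := by
  induction n with
  | zero => simp [polyIter]
  | succ n ih =>
    conv_lhs => rw [polyIter, ih, ← comp_assoc]
    rw [polyIter]

end CommSemiring

variable {R : Type*} [CommRing R]

theorem polyIter_succ_sub_X (f : R[X]) (n : ℕ) :
    polyIter f (n + 1) - X = (polyIter f n - X).comp f + (f - X) := by
  rw [polyIter_succ', sub_comp, X_comp, sub_add_sub_cancel]

theorem X_pow_dvd_polyIter_sub_X {f : R[X]} {m : ℕ} (hf : X ∣ f) (hm : X ^ m ∣ f - X) (n : ℕ) :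
    X ^ m ∣ polyIter f n - X := by
  induction n with
  | zero => simp [polyIter]
  | succ n ih =>
    rw [polyIter_succ_sub_X]
    exact (X_pow_dvd_comp hf ih).add hm

theorem coeff_polyIter_sub_X {f : R[X]} {m : ℕ} (hf : X ∣ f) (hm : X ^ m ∣ f - X) (n : ℕ) :
    (polyIter f n - X).coeff m =
      (f - X).coeff m * ∑ i ∈ range n, (f.coeff 1 ^ m) ^ i := by
  induction n with
  | zero => simp [polyIter]
  | succ n ih =>
    rw [polyIter_succ_sub_X, coeff_add,
      coeff_comp_of_X_pow_dvd hf (X_pow_dvd_polyIter_sub_X hf hm n), ih, geom_sum_succ]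
    ring

end LowestCoeff

section LeadingCoeff

theorem natDegree_polyIter {R : Type*} [CommSemiring R] [Nontrivial R] [NoZeroDivisors R] (f : R[X])
    (n : ℕ) : (polyIter f n).natDegree = f.natDegree ^ n := by
  induction n with
  | zero => simp [polyIter]
  | succ n ih => rw [polyIter, natDegree_comp, ih, pow_succ']

variable {K : Type*} [NormedField K] {f : K[X]}

theorem norm_leadingCoeff_polyIter (hd : f.natDegree ≠ 0) (hlead : ‖f.leadingCoeff‖ = 1) (n : ℕ) :
    ‖(polyIter f n).leadingCoeff‖ = 1 := by
  induction n with
  | zero => simp [polyIter]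
  | succ n ih =>
    have hdn : (polyIter f n).natDegree ≠ 0 := natDegree_polyIter f n ▸ pow_ne_zero n hd
    rw [polyIter, leadingCoeff_comp hdn, norm_mul, norm_pow, ih, hlead, one_pow, one_mul]

theorem norm_leadingCoeff_polyIter_sub_X (hd : 2 ≤ f.natDegree) (hlead : ‖f.leadingCoeff‖ = 1)
    {n : ℕ} (hn : n ≠ 0) : ‖(polyIter f n - X).leadingCoeff‖ = 1 := by
  have hdeg : (X : K[X]).degree < (polyIter f n).degree := degree_lt_degree <| by
    rw [natDegree_polyIter, natDegree_X]
    exact Nat.one_lt_pow hn hd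
  rw [leadingCoeff_sub_of_degree_lt hdeg, norm_leadingCoeff_polyIter (by omega) hlead]

theorem polyIter_sub_X_ne_zero (hd : 2 ≤ f.natDegree) (hlead : ‖f.leadingCoeff‖ = 1) {n : ℕ}
    (hn : n ≠ 0) : polyIter f n - X ≠ 0 := fun h ↦ by
  simpa [h] using norm_leadingCoeff_polyIter_sub_X hd hlead hn

end LeadingCoeff

section Roots

variable {K : Type*} [NormedField K]

theorem norm_coeff_zero_eq_norm_leadingCoeff_mul_prod [DecidableEq K] {g : K[X]}
    (hg : g.Splits) {S : Finset K} (hS : g.roots.toFinset ⊆ S) :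
    ‖g.coeff 0‖ = ‖g.leadingCoeff‖ * ∏ ξ ∈ S, ‖ξ‖ ^ rootMultiplicity ξ g := by
  rw [hg.coeff_zero_eq_leadingCoeff_mul_prod_roots, prod_multiset_count_of_subset _ _ hS]
  simp [norm_prod]

theorem norm_coeff_eq_norm_leadingCoeff_mul_prod {g : K[X]} (hg : g.Splits) {m : ℕ}
    (hm : X ^ m ∣ g) (hgm : g.coeff m ≠ 0) {S : Finset K} (hS : ∀ ξ ∈ S, ξ ≠ 0)
    (hroots : ∀ ξ, ξ ≠ 0 → g.IsRoot ξ → ξ ∈ S) :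
    ‖g.coeff m‖ = ‖g.leadingCoeff‖ * ∏ ξ ∈ S, ‖ξ‖ ^ rootMultiplicity ξ g := by
  classical
  have hg0 : g ≠ 0 := fun h ↦ hgm (by simp [h])
  obtain ⟨h, rfl⟩ := hm
  have hcoeff : (X ^ m * h).coeff m = h.coeff 0 := by simp [coeff_X_pow_mul']
  rw [hcoeff] at hgm ⊢
  have hmult (ξ : K) (hξ : ξ ∈ S) : rootMultiplicity ξ (X ^ m * h) = rootMultiplicity ξ h := by
    rw [rootMultiplicity_mul hg0, rootMultiplicity_eq_zero (p := X ^ m), zero_add]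
    simp [hS ξ hξ]
  have hsub : h.roots.toFinset ⊆ S := fun ξ hξ ↦ by
    have hroot : h.IsRoot ξ := isRoot_of_mem_roots (Multiset.mem_toFinset.1 hξ)
    refine hroots ξ ?_ (root_mul_left_of_isRoot _ hroot)
    rintro rfl
    exact hgm (by rwa [coeff_zero_eq_eval_zero])
  rw [norm_coeff_zero_eq_norm_leadingCoeff_mul_prod (hg.of_dvd hg0 (dvd_mul_left h _)) hsub,
    leadingCoeff_mul, leadingCoeff_X_pow, one_mul]
  exact congrArg _ (prod_congr rfl fun ξ hξ ↦ by rw [hmult ξ hξ])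

end Roots

section PeriodicPoints

theorem eval_polyIter {R : Type*} [CommSemiring R] (f : R[X]) (n : ℕ) (x : R) :
    (polyIter f n).eval x = (fun x ↦ f.eval x)^[n] x := by
  induction n with
  | zero => simp [polyIter]
  | succ n ih => rw [polyIter, eval_comp, ih, Function.iterate_succ_apply']

theorem isRoot_polyIter_sub_X_iff {R : Type*} [CommRing R] {f : R[X]} {n : ℕ} {x : R} :
    (polyIter f n - X).IsRoot x ↔ Function.IsPeriodicPt (fun x ↦ f.eval x) n x := by
  rw [IsRoot.def, eval_sub, eval_X, sub_eq_zero, eval_polyIter]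
  rfl

open Classical in
/-- The finite set of nonzero points of period dividing `n`, i.e. of nonzero roots of
`f⁽ⁿ⁾(X) - X`. Its members are the only nonzero points where `aStar f n` can be nonzero. The value
is the junk value `∅` when `f⁽ⁿ⁾ = X`. -/
noncomputable def nonzeroPeriodicPts {K : Type*} [Field K] (f : K[X]) (n : ℕ) : Finset K :=
  (polyIter f n - X).roots.toFinset.erase 0

variable {K : Type*} [Field K] {f : K[X]} {n : ℕ} {x : K}

theorem mem_nonzeroPeriodicPts (hn : polyIter f n - X ≠ 0) :
    x ∈ nonzeroPeriodicPts f n ↔ x ≠ 0 ∧ Function.IsPeriodicPt (fun x ↦ f.eval x) n x := by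
  classical
  rw [nonzeroPeriodicPts, mem_erase, Multiset.mem_toFinset, mem_roots hn,
    isRoot_polyIter_sub_X_iff]

theorem isPeriodicPt_of_aStar_ne_zero (hx : aStar f n x ≠ 0) :
    Function.IsPeriodicPt (fun x ↦ f.eval x) n x := by
  obtain ⟨k, hk, hne⟩ := exists_ne_zero_of_sum_ne_zero hx
  have hmult : aMult f k x ≠ 0 := by exact_mod_cast right_ne_zero_of_mul hne
  have hroot : (polyIter f k - X).IsRoot x := by_contra fun h ↦ hmult (rootMultiplicity_eq_zero h)
  exact (isRoot_polyIter_sub_X_iff.1 hroot).trans_dvd (Nat.dvd_of_mem_divisors hk)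

theorem zpow_aStar {G : Type*} [CommGroupWithZero G] {a : G} (ha : a ≠ 0) (f : K[X]) (n : ℕ)
    (x : K) :
    a ^ aStar f n x =
      ∏ k ∈ n.divisors, (a ^ aMult f k x) ^ ArithmeticFunction.moebius (n / k) := by
  rw [aStar, zpow_sum_eq_prod_zpow ha]
  refine prod_congr rfl fun k _ ↦ ?_
  rw [mul_comm, zpow_mul, zpow_natCast]

end PeriodicPoints

section PeriodicProduct

variable {K : Type*} [NormedField K] {f : K[X]} {n : ℕ}

theorem finprod_norm_zpow_aStar (hn : polyIter f n - X ≠ 0) :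
    ∏ᶠ (ξ : K) (_ : ξ ≠ 0 ∧ ξ ∈ Function.periodicPts (fun x ↦ f.eval x)), ‖ξ‖ ^ aStar f n ξ =
      ∏ k ∈ n.divisors, (∏ ξ ∈ nonzeroPeriodicPts f n, ‖ξ‖ ^ aMult f k ξ) ^
        ArithmeticFunction.moebius (n / k) := by
  have hn0 : 0 < n := Nat.pos_of_ne_zero fun h ↦ hn (by simp [h, polyIter])
  have hfinite :
      ∏ᶠ (ξ : K) (_ : ξ ≠ 0 ∧ ξ ∈ Function.periodicPts (fun x ↦ f.eval x)), ‖ξ‖ ^ aStar f n ξ =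
        ∏ ξ ∈ nonzeroPeriodicPts f n, ‖ξ‖ ^ aStar f n ξ := by
    refine finprod_cond_eq_prod_of_cond_iff _ fun {ξ} hξ ↦ ?_
    have hper := isPeriodicPt_of_aStar_ne_zero fun h ↦ hξ (by rw [h, zpow_zero])
    rw [mem_nonzeroPeriodicPts hn]
    exact and_congr_right fun _ ↦ iff_of_true ⟨n, hn0, hper⟩ hper
  rw [hfinite, prod_congr rfl fun ξ hξ ↦
    zpow_aStar (norm_ne_zero_iff.2 ((mem_nonzeroPeriodicPts hn).1 hξ).1) f n ξ, prod_comm]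
  simp only [prod_zpow]

variable [IsUltrametricDist K] {p : ℕ}

theorem norm_coeff_polyIter_sub_X {m : ℕ} (hp : p.Prime) (hp1 : ‖(p : K)‖ < 1) (hf : X ∣ f)
    (hm : X ^ m ∣ f - X) (hderiv : ‖f.coeff 1 - 1‖ < ‖(p : K)‖) (k : ℕ) :
    ‖(polyIter f k - X).coeff m‖ = ‖(k : K)‖ * ‖(f - X).coeff m‖ := by
  have hpow : ‖f.coeff 1 ^ m - 1‖ < ‖(p : K)‖ :=
    (norm_pow_sub_one_le (norm_le_one_of_norm_sub_one_le (hderiv.trans hp1).le) m).trans_lt hderiv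
  rw [coeff_polyIter_sub_X hf hm, norm_mul, norm_geom_sum_eq_norm_natCast fun q hq _ ↦
    hpow.trans_le (norm_natCast_le_norm_natCast_prime hp hp1 hq), mul_comm]

theorem prod_nonzeroPeriodicPts_norm_pow_aMult [IsAlgClosed K] {m k : ℕ} (hp : p.Prime)
    (hp1 : ‖(p : K)‖ < 1) (hd : 2 ≤ f.natDegree) (hlead : ‖f.leadingCoeff‖ = 1) (hf : X ∣ f)
    (hm : X ^ m ∣ f - X) (hfm : (f - X).coeff m ≠ 0)
    (hderiv : ‖f.coeff 1 - 1‖ < ‖(p : K)‖) (hn : n ≠ 0) (hk : k ∣ n) :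
    ∏ ξ ∈ nonzeroPeriodicPts f n, ‖ξ‖ ^ aMult f k ξ =
      ‖(p : K)‖ ^ k.factorization p * ‖(f - X).coeff m‖ := by
  have hk0 : k ≠ 0 := ne_zero_of_dvd_ne_zero hn hk
  have hmem {ξ : K} := mem_nonzeroPeriodicPts (x := ξ) (polyIter_sub_X_ne_zero hd hlead hn)
  have hcoeff : ‖(polyIter f k - X).coeff m‖ =
      ‖(p : K)‖ ^ k.factorization p * ‖(f - X).coeff m‖ := by
    rw [norm_coeff_polyIter_sub_X hp hp1 hf hm hderiv,
      norm_natCast_eq_norm_pow_factorization hp hp1 hk0]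
  have hcoeff_ne : (polyIter f k - X).coeff m ≠ 0 := by
    rw [← norm_ne_zero_iff, hcoeff]
    exact mul_ne_zero (pow_ne_zero _ ((norm_nonneg _).trans_lt hderiv).ne')
      (norm_ne_zero_iff.2 hfm)
  rw [← hcoeff, norm_coeff_eq_norm_leadingCoeff_mul_prod (IsAlgClosed.splits _)
    (X_pow_dvd_polyIter_sub_X hf hm k) hcoeff_ne (fun ξ hξ ↦ (hmem.1 hξ).1)
    fun ξ hξ hroot ↦ hmem.2 ⟨hξ, (isRoot_polyIter_sub_X_iff.1 hroot).trans_dvd hk⟩,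
    norm_leadingCoeff_polyIter_sub_X hd hlead hk0, one_mul]
  rfl

open Classical in
theorem stmt4_general [IsAlgClosed K] (hp : p.Prime) (hp1 : ‖(p : K)‖ < 1)
    (hd : 2 ≤ f.natDegree) (hlead : ‖f.leadingCoeff‖ = 1) (h0 : f.eval 0 = 0)
    (hderiv : ‖f.derivative.eval 0 - 1‖ < ‖(p : K)‖) (hn : 1 < n) :
    ∏ᶠ (ξ : K) (_ : ξ ≠ 0 ∧ ξ ∈ Function.periodicPts (fun x ↦ f.eval x)), ‖ξ‖ ^ aStar f n ξ =
      if ∃ k, n = p ^ k then ‖(p : K)‖ else 1 := by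
  have hn0 : n ≠ 0 := (zero_lt_one.trans hn).ne'
  have hf : X ∣ f := X_dvd_iff.2 (by rwa [coeff_zero_eq_eval_zero])
  have hderiv' : ‖f.coeff 1 - 1‖ < ‖(p : K)‖ := by
    simpa [← coeff_zero_eq_eval_zero, coeff_derivative] using hderiv
  have hfX : f - X ≠ 0 := by
    simpa [polyIter] using polyIter_sub_X_ne_zero hd hlead one_ne_zero
  set m := (f - X).natTrailingDegree
  have hm : X ^ m ∣ f - X := X_pow_dvd_iff.2 fun _ ↦ coeff_eq_zero_of_lt_natTrailingDegree
  have hfm : (f - X).coeff m ≠ 0 := trailingCoeff_nonzero_iff_nonzero.2 hfX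
  have hprod (k : ℕ) (hk : k ∣ n) := prod_nonzeroPeriodicPts_norm_pow_aMult hp hp1 hd hlead hf hm
    hfm hderiv' hn0 hk
  rw [finprod_norm_zpow_aStar (polyIter_sub_X_ne_zero hd hlead hn0),
    prod_congr rfl fun k hk ↦ congrArg (· ^ _) (hprod k (Nat.dvd_of_mem_divisors hk))]
  exact prod_divisors_pow_factorization_mul_zpow_moebius hp hn
    ((norm_nonneg _).trans_lt hderiv).ne' (norm_ne_zero_iff.2 hfm)

end PeriodicProduct

/-- if `f` has good reduction, `f(0) = 0` and `‖f'(0) - 1‖ < 1/p`, then for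
`n > 1` the product of `‖ξ‖ ^ aₙ*(ξ)` over all nonzero periodic points `ξ` equals `1/p` if
`n` is a power of `p` and `1` otherwise. -/
theorem stmt4 {K : Type*} [NormedField K] [IsUltrametricDist K] [CompleteSpace K]
    [IsAlgClosed K] [CharZero K]
    (p : ℕ) (hp : p.Prime) (hpK : ‖(p : K)‖ = (p : ℝ)⁻¹)
    (f : K[X]) (d : ℕ) (hd : 2 ≤ d) (hdeg : f.natDegree = d)
    (hcoeff : ∀ i, ‖f.coeff i‖ ≤ 1) (hlead : ‖f.leadingCoeff‖ = 1)
    (h0 : f.eval 0 = 0) (hderiv : ‖f.derivative.eval 0 - 1‖ < (p : ℝ)⁻¹)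
    (n : ℕ) (hn : 1 < n) :
    ((∃ k : ℕ, n = p ^ k) →
      (∏ᶠ (ξ : K) (_ : ξ ≠ 0 ∧ ξ ∈ Function.periodicPts (fun x => f.eval x)),
        ‖ξ‖ ^ aStar f n ξ) = (p : ℝ)⁻¹) ∧
    ((¬ ∃ k : ℕ, n = p ^ k) →
      (∏ᶠ (ξ : K) (_ : ξ ≠ 0 ∧ ξ ∈ Function.periodicPts (fun x => f.eval x)),
        ‖ξ‖ ^ aStar f n ξ) = 1) := by
  have hp1 : ‖(p : K)‖ < 1 := hpK ▸ inv_lt_one_of_one_lt₀ (mod_cast hp.one_lt)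
  rw [stmt4_general hp hp1 (hdeg ▸ hd) hlead h0 (hpK ▸ hderiv) hn, hpK]
  exact ⟨fun h ↦ if_pos h, fun h ↦ if_neg h⟩
end
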